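/- arXiv:2407.02559 — 3 statements merged into one kernel-verified Lean document; each statement's English description precedes it below -/
import Mathlib

section
/- Let G = (V,E) be a network with source s and sink t, and let n ≥ 1. Then the minimum of the Hamiltonian H_G^{(n)}(α) over all labelings α of G equals (n−1)·maxflow(G). -/
/-!
The value `(n-1) · maxflow` is squeezed between two bounds.

*Lower bound.* A permutation `σ` is a product of at most `n - c(σ)` transpositions. Hence along any
walk from `s` to `t` the sum of the edge terms is at least the length of some factorization of `γ`
into transpositions. The graph on `Fin n` whose edges are these transpositions is connected, because
`γ` acts transitively, so there are at least `n - 1` of them (`sub_one_le_length_of_prod_swap`).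
Summing over edge-disjoint paths gives `(n-1) · maxflow ≤ H(α)`.

*Upper bound.* Given an `s`-`t` cut `S`, the labeling equal to `1` on `S` and to `γ` off `S` has
Hamiltonian `(n-1)` times the size of the cut. The edge version of Menger's theorem (`exists_cut`)
supplies a cut of size at most `maxflow`. It is proved through integral flows with values in
`{-1, 0, 1}`: a flow of maximal value has no augmenting path, so the set reachable in the residual
graph is a cut saturated by the flow (`exists_flow_cut`), and a flow of value `k` decomposes into
`k` edge-disjoint paths (`IsFlow.exists_paths`).
-/

/-- The number of cycles of a permutation of `Fin n`, counting fixed points as cycles. -/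
def cycleCount {n : ℕ} (σ : Equiv.Perm (Fin n)) : ℕ :=
  σ.cycleType.card + (n - σ.support.card)

/-- The Cayley length `|σ| = n - c(σ)` of a permutation of `Fin n`. -/
def cayleyLength {n : ℕ} (σ : Equiv.Perm (Fin n)) : ℕ := n - cycleCount σ

/-- The Cayley distance `d(σ, τ) = n - c(σ⁻¹ τ)` on `S_n`. -/
def cayleyDist {n : ℕ} (σ τ : Equiv.Perm (Fin n)) : ℕ := cayleyLength (σ⁻¹ * τ)

lemma cayleyDist_comm {n : ℕ} (σ τ : Equiv.Perm (Fin n)) :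
    cayleyDist σ τ = cayleyDist τ σ := by
  unfold cayleyDist cayleyLength cycleCount
  rw [show τ⁻¹ * σ = (σ⁻¹ * τ)⁻¹ by group]
  rw [Equiv.Perm.cycleType_inv, Equiv.Perm.support_inv]

/-- The contribution `d(α x, α y)` of an (undirected) edge `{x, y}` to the Hamiltonian. -/
def edgeTerm {V : Type*} {n : ℕ} (α : V → Equiv.Perm (Fin n)) : Sym2 V → ℕ :=
  Sym2.lift ⟨fun x y => cayleyDist (α x) (α y), fun _ _ => cayleyDist_comm _ _⟩

/-- The Hamiltonian `H_G^{(n)}(α) = Σ_{{x,y} ∈ E} d(α x, α y)` of a labeling of the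
vertices of a graph by permutations. -/
noncomputable def hamiltonian {V : Type*} (G : SimpleGraph V) {n : ℕ}
    (α : V → Equiv.Perm (Fin n)) : ℕ :=
  ∑ᶠ e ∈ G.edgeSet, edgeTerm α e

/-- `maxflow G s t` is the maximum cardinality of a collection of pairwise edge-disjoint
paths from `s` to `t` in `G`. -/
noncomputable def maxflow {V : Type*} (G : SimpleGraph V) (s t : V) : ℕ :=
  sSup {k | ∃ π : Fin k → G.Walk s t, (∀ i, (π i).IsPath) ∧
    ∀ i j, i ≠ j → List.Disjoint (π i).edges (π j).edges}

open Finset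

/-! ### Factorizations into transpositions -/

/-- The product of the transpositions encoded by a list of pairs. -/
def swapProd {β : Type*} [DecidableEq β] (l : List (β × β)) : Equiv.Perm β :=
  (l.map fun p => Equiv.swap p.1 p.2).prod

lemma swapProd_append {β : Type*} [DecidableEq β] (l m : List (β × β)) :
    swapProd (l ++ m) = swapProd l * swapProd m := by
  simp [swapProd]

/-- Every permutation is a product of at most (size of support) − (number of nontrivial cycles)
transpositions. -/
lemma exists_swapProd_support {β : Type*} [Fintype β] [DecidableEq β] (σ : Equiv.Perm β) :
    ∃ l : List (β × β), swapProd l = σ ∧ l.length + σ.cycleType.card ≤ σ.support.card := by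
  induction σ using Equiv.Perm.cycle_induction_on with
  | base_one => exact ⟨[], by simp [swapProd]⟩
  | base_cycles σ hσ =>
    obtain ⟨x, hx, -⟩ := id hσ
    -- `List.formPerm` of the orbit list of `x` is by definition a product of transpositions.
    refine ⟨(σ.toList x).zip (σ.toList x).tail, ?_, ?_⟩
    · have h := Equiv.Perm.formPerm_toList σ x
      rw [hσ.cycleOf_eq hx] at h
      rw [swapProd, List.zip, List.map_zipWith]
      exact h
    · have hl : (σ.toList x).length = σ.support.card := by
        rw [Equiv.Perm.length_toList, hσ.cycleOf_eq hx]
      have := hσ.two_le_card_support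
      rw [hσ.cycleType, List.length_zip, List.length_tail, hl, Multiset.card_singleton]
      omega
  | induction_disjoint σ τ hd _ h₁ h₂ =>
    obtain ⟨l, hl, hl'⟩ := h₁
    obtain ⟨m, hm, hm'⟩ := h₂
    refine ⟨l ++ m, by rw [swapProd_append, hl, hm], ?_⟩
    rw [hd.cycleType_mul, hd.card_support_mul, List.length_append, Multiset.card_add]
    omega

lemma exists_swapProd {n : ℕ} (σ : Equiv.Perm (Fin n)) :
    ∃ l : List (Fin n × Fin n), swapProd l = σ ∧ l.length ≤ cayleyLength σ := by
  obtain ⟨l, hl, h⟩ := exists_swapProd_support σ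
  refine ⟨l, hl, ?_⟩
  have : σ.support.card ≤ n := by simpa using Finset.card_le_univ σ.support
  unfold cayleyLength cycleCount
  omega

lemma sameCycle_of_cycleCount {n : ℕ} {γ : Equiv.Perm (Fin n)} (hγ : cycleCount γ = 1)
    (x y : Fin n) : γ.SameCycle x y := by
  have hle : γ.support.card ≤ n := by simpa using Finset.card_le_univ γ.support
  unfold cycleCount at hγ
  by_cases h1 : γ = 1
  · subst h1
    have : n = 1 := by simpa using hγ
    subst this
    rw [Subsingleton.elim x y]
  · have hpos : 0 < γ.cycleType.card := by
      rwa [Equiv.Perm.card_cycleType_pos]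
    have hc : γ.IsCycle := Equiv.Perm.card_cycleType_eq_one.mp (by omega)
    have hu : γ.support = univ := by
      rw [← Finset.card_eq_iff_eq_univ, Fintype.card_fin]; omega
    have hs : ∀ z, γ z ≠ z := fun z => by
      rw [← Equiv.Perm.mem_support, hu]; exact mem_univ z
    exact hc.sameCycle (hs x) (hs y)

lemma reachable_swapProd {β : Type*} [DecidableEq β] (E : Set (Sym2 β)) (l : List (β × β))
    (hl : ∀ p ∈ l, s(p.1, p.2) ∈ E) (x : β) :
    (SimpleGraph.fromEdgeSet E).Reachable x (swapProd l x) := by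
  induction l with
  | nil => simp [swapProd]
  | cons p l ih =>
    have h := ih fun q hq => hl q (List.mem_cons_of_mem _ hq)
    refine h.trans ?_
    have hs : swapProd (p :: l) x = Equiv.swap p.1 p.2 (swapProd l x) := by simp [swapProd]
    rw [hs]
    generalize swapProd l x = z
    have hp := hl p List.mem_cons_self
    by_cases hne : p.1 = p.2
    · simp [hne]
    have hadj : (SimpleGraph.fromEdgeSet E).Adj p.1 p.2 := by
      rw [SimpleGraph.fromEdgeSet_adj]; exact ⟨hp, hne⟩
    rcases eq_or_ne z p.1 with rfl | h1
    · rw [Equiv.swap_apply_left]; exact hadj.reachable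
    rcases eq_or_ne z p.2 with rfl | h2
    · rw [Equiv.swap_apply_right]; exact hadj.symm.reachable
    rw [Equiv.swap_apply_of_ne_of_ne h1 h2]

/-- A factorization of a full cycle into transpositions has at least `n - 1` factors, since the
transpositions form the edges of a connected graph on `Fin n`. -/
lemma sub_one_le_length_of_prod_swap {n : ℕ} (hn : 1 ≤ n) (l : List (Fin n × Fin n))
    (hl : cycleCount (swapProd l) = 1) : n - 1 ≤ l.length := by
  classical
  let F : Finset (Sym2 (Fin n)) := (l.map fun p => s(p.1, p.2)).toFinset
  let H := SimpleGraph.fromEdgeSet (F : Set (Sym2 (Fin n)))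
  have hstep : ∀ x, H.Reachable x (swapProd l x) :=
    reachable_swapProd _ l fun p hp => by
      simp only [F, List.coe_toFinset, Set.mem_ofPred_eq]
      exact List.mem_map_of_mem hp
  have hpow : ∀ (k : ℕ) x, H.Reachable x ((swapProd l ^ k) x) := by
    intro k
    induction k with
    | zero => intro x; simp
    | succ k ih =>
      intro x
      rw [pow_succ', Equiv.Perm.mul_apply]
      exact (ih x).trans (hstep _)
  have hconn : H.Connected := by
    have : Nonempty (Fin n) := ⟨⟨0, hn⟩⟩
    refine ⟨fun x y => ?_⟩
    obtain ⟨k, -, -, hk⟩ := (sameCycle_of_cycleCount hl x y).exists_pow_eq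
    rw [← hk]
    exact hpow k x
  have h1 := hconn.card_vert_le_card_edgeSet_add_one
  have h2 : Nat.card H.edgeSet ≤ F.card := by
    rw [← Set.ncard_coe_finset, ← Nat.card_coe_set_eq]
    refine Nat.card_mono F.finite_toSet ?_
    rw [SimpleGraph.edgeSet_fromEdgeSet]
    exact Set.sdiff_subset
  have h3 : F.card ≤ l.length := by
    simpa using List.toFinset_card_le (l.map fun p => s(p.1, p.2))
  rw [Nat.card_eq_fintype_card, Fintype.card_fin] at h1
  omega

lemma exists_swapProd_walk {V : Type*} {G : SimpleGraph V} {n : ℕ} (α : V → Equiv.Perm (Fin n))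
    {u v : V} (p : G.Walk u v) :
    ∃ l : List (Fin n × Fin n), swapProd l = (α u)⁻¹ * α v ∧
      l.length ≤ (p.edges.map (edgeTerm α)).sum := by
  induction p with
  | nil => exact ⟨[], by simp [swapProd]⟩
  | @cons a b c h p ih =>
    obtain ⟨l, hl, hl'⟩ := ih
    obtain ⟨m, hm, hm'⟩ := exists_swapProd ((α a)⁻¹ * α b)
    refine ⟨m ++ l, by rw [swapProd_append, hl, hm]; group, ?_⟩
    rw [SimpleGraph.Walk.edges_cons, List.map_cons, List.sum_cons, List.length_append]
    exact add_le_add hm' hl'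

lemma hamiltonian_eq_sum {V : Type*} [Fintype V] [DecidableEq V] (G : SimpleGraph V)
    [DecidableRel G.Adj] {n : ℕ} (α : V → Equiv.Perm (Fin n)) :
    hamiltonian G α = ∑ e ∈ G.edgeFinset, edgeTerm α e := by
  rw [hamiltonian, ← SimpleGraph.coe_edgeFinset, finsum_mem_coe_finset]

/-- `k` edge-disjoint paths bound the Hamiltonian below by `(n-1) k`. -/
lemma mul_le_hamiltonian {V : Type*} [Fintype V] (G : SimpleGraph V) {s t : V} {n : ℕ}
    (hn : 1 ≤ n) (α : V → Equiv.Perm (Fin n)) (hs : α s = 1) (ht : cycleCount (α t) = 1) {k : ℕ}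
    (π : Fin k → G.Walk s t) (hπ : ∀ i, (π i).IsPath)
    (hd : ∀ i j, i ≠ j → List.Disjoint (π i).edges (π j).edges) :
    (n - 1) * k ≤ hamiltonian G α := by
  classical
  have hpath : ∀ i, n - 1 ≤ ∑ e ∈ (π i).edges.toFinset, edgeTerm α e := by
    intro i
    obtain ⟨l, hl, hl'⟩ := exists_swapProd_walk α (π i)
    rw [hs, inv_one, one_mul] at hl
    rw [List.sum_toFinset _ (hπ i).isTrail.edges_nodup]
    exact (sub_one_le_length_of_prod_swap hn l (hl ▸ ht)).trans hl'
  calc (n - 1) * k = ∑ _i : Fin k, (n - 1) := by simp [mul_comm]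
    _ ≤ ∑ i, ∑ e ∈ (π i).edges.toFinset, edgeTerm α e := sum_le_sum fun i _ => hpath i
    _ = ∑ e ∈ univ.biUnion fun i => (π i).edges.toFinset, edgeTerm α e := by
      rw [sum_biUnion]
      intro i _ j _ hij
      rw [Function.onFun, List.disjoint_toFinset_iff_disjoint]
      exact hd i j hij
    _ ≤ hamiltonian G α := by
      rw [hamiltonian_eq_sum]
      refine sum_le_sum_of_subset fun e he => ?_
      simp only [mem_biUnion, mem_univ, true_and, List.mem_toFinset] at he
      obtain ⟨i, hi⟩ := he
      exact SimpleGraph.mem_edgeFinset.mpr ((π i).edges_subset_edgeSet hi)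

/-! ### Unit flows -/

section Flow

variable {V : Type*} {G : SimpleGraph V} {s t : V}

/-- Integral `s`-`t` flows on `G` with all capacities `1`, as antisymmetric functions: `f x y` is
the net amount sent from `x` to `y`. -/
structure IsFlow [Fintype V] (G : SimpleGraph V) (s t : V) (f : V → V → ℤ) : Prop where
  anti : ∀ x y, f x y = - f y x
  le_one : ∀ x y, f x y ≤ 1
  adj : ∀ x y, ¬ G.Adj x y → f x y = 0
  cons : ∀ x, x ≠ s → x ≠ t → ∑ y, f x y = 0

/-- The net flow across any cut equals the value of the flow. -/
lemma IsFlow.sum_cut [Fintype V] [DecidableEq V] {f : V → V → ℤ} (hf : IsFlow G s t f)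
    {S : Finset V} (hs : s ∈ S) (ht : t ∉ S) : ∑ x ∈ S, ∑ y ∈ Sᶜ, f x y = ∑ y, f s y := by
  have h1 : ∑ x ∈ S, ∑ y, f x y = ∑ y, f s y :=
    sum_eq_single_of_mem s hs fun x hx hxs => hf.cons x hxs fun h => ht (h ▸ hx)
  have h2 : ∑ x ∈ S, ∑ y ∈ S, f x y = 0 := by
    have h : ∑ x ∈ S, ∑ y ∈ S, f x y = - ∑ x ∈ S, ∑ y ∈ S, f x y := by
      conv_lhs => rw [sum_comm]
      simp only [← sum_neg_distrib]
      exact sum_congr rfl fun x _ => sum_congr rfl fun y _ => hf.anti y x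
    omega
  have h3 : ∑ x ∈ S, ∑ y, f x y = ∑ x ∈ S, ∑ y ∈ S, f x y + ∑ x ∈ S, ∑ y ∈ Sᶜ, f x y := by
    rw [← sum_add_distrib]
    exact sum_congr rfl fun x _ => (sum_add_sum_compl S _).symm
  omega

/-- Either `t` can be reached from `s` by a path all of whose steps satisfy `R`, or some cut is
crossed by no `R`-step. -/
lemma exists_path_or_cut [Fintype V] (R : V → V → Prop) (hR : ∀ x y, R x y → G.Adj x y) (s t : V) :
    (∃ p : G.Walk s t, p.IsPath ∧ ∀ d ∈ p.darts, R d.fst d.snd) ∨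
    ∃ S : Finset V, s ∈ S ∧ t ∉ S ∧ ∀ x ∈ S, ∀ y ∉ S, ¬ R x y := by
  classical
  by_cases h : Relation.ReflTransGen R s t
  · left
    have key : ∃ p : G.Walk s t, ∀ d ∈ p.darts, R d.fst d.snd := by
      induction h with
      | refl => exact ⟨.nil, by simp⟩
      | tail _ hbc ih =>
        obtain ⟨p, hp⟩ := ih
        refine ⟨p.concat (hR _ _ hbc), fun d hd => ?_⟩
        rw [SimpleGraph.Walk.darts_concat, List.concat_eq_append, List.mem_append,
          List.mem_singleton] at hd
        rcases hd with hd | rfl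
        · exact hp d hd
        · exact hbc
    obtain ⟨p, hp⟩ := key
    exact ⟨p.bypass, p.bypass_isPath, fun d hd => hp d (p.darts_bypass_subset_darts hd)⟩
  · right
    refine ⟨univ.filter (Relation.ReflTransGen R s), by simp [Relation.ReflTransGen.refl],
      by simpa using h, fun x hx y hy hxy => ?_⟩
    simp only [mem_filter, mem_univ, true_and] at hx hy
    exact hy (hx.tail hxy)

/-- The flow sending one unit along a walk. -/
def walkFlow [DecidableEq V] {u v : V} (p : G.Walk u v) (x y : V) : ℤ :=
  ((p.darts.map SimpleGraph.Dart.toProd).count (x, y) : ℤ)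
    - (p.darts.map SimpleGraph.Dart.toProd).count (y, x)

lemma sum_walkFlow [Fintype V] [DecidableEq V] {u v : V} (p : G.Walk u v) (x : V) :
    ∑ y, walkFlow p x y = (if x = u then 1 else 0) - (if x = v then 1 else 0) := by
  induction p with
  | nil => simp [walkFlow]
  | @cons a b c h p ih =>
    have hstep : ∀ y, walkFlow (.cons h p) x y
        = walkFlow p x y + ((if x = a then (if y = b then 1 else 0) else 0)
          - (if x = b then (if y = a then 1 else 0) else 0)) := by
      intro y
      simp only [walkFlow, SimpleGraph.Walk.darts_cons, List.map_cons, List.count_cons, beq_iff_eq,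
        Prod.mk.injEq]
      have e1 : (a = x ∧ b = y) ↔ (x = a ∧ y = b) := by grind
      have e2 : (a = y ∧ b = x) ↔ (x = b ∧ y = a) := by grind
      simp only [e1, e2, ite_and]
      push_cast
      ring
    rw [sum_congr rfl fun y _ => hstep y, sum_add_distrib, ih, sum_sub_distrib]
    have : ∀ z w : V, ∑ y, (if x = z then (if y = w then (1 : ℤ) else 0) else 0)
        = if x = z then 1 else 0 := by
      intro z w; split_ifs <;> simp
    rw [this, this]
    ring

/-- A path traverses each edge at most once, so its flow is `1` along its darts, `-1` against them
and `0` elsewhere. -/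
lemma walkFlow_cases [DecidableEq V] {u v : V} (p : G.Walk u v) (hp : p.IsPath) (x y : V) :
    ((∃ d ∈ p.darts, d.fst = x ∧ d.snd = y) ∧ walkFlow p x y = 1) ∨
    ((∃ d ∈ p.darts, d.fst = y ∧ d.snd = x) ∧ walkFlow p x y = -1) ∨
    (s(x, y) ∉ p.edges ∧ walkFlow p x y = 0) := by
  have hmem : ∀ a b, (a, b) ∈ p.darts.map SimpleGraph.Dart.toProd ↔
      ∃ d ∈ p.darts, d.fst = a ∧ d.snd = b := by
    intro a b
    simp [List.mem_map, Prod.ext_iff]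
  have hedges : p.edges = (p.darts.map SimpleGraph.Dart.toProd).map fun q => s(q.1, q.2) := by
    rw [SimpleGraph.Walk.edges, List.map_map]; rfl
  have hnd : ((p.darts.map SimpleGraph.Dart.toProd).map fun q => s(q.1, q.2)).Nodup :=
    hedges ▸ hp.isTrail.edges_nodup
  unfold walkFlow
  rw [hedges, ← hmem, ← hmem]
  generalize p.darts.map SimpleGraph.Dart.toProd = L at *
  have hL : L.Nodup := hnd.of_map
  have hne : (x, y) ∈ L → (y, x) ∈ L → x = y := fun h1 h2 => by
    have := List.inj_on_of_nodup_map hnd h1 h2 Sym2.eq_swap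
    exact congrArg Prod.fst this
  have hloop : ∀ z, (z, z) ∉ L := by
    intro z hz
    obtain ⟨d, -, h1, h2⟩ := (hmem z z).mp hz
    exact d.fst_ne_snd (h1.trans h2.symm)
  rw [hL.count, hL.count]
  by_cases h1 : (x, y) ∈ L <;> by_cases h2 : (y, x) ∈ L
  · have := hne h1 h2
    subst this
    exact absurd h1 (hloop x)
  · simp [h1, h2]
  · simp [h1, h2]
  · refine .inr (.inr ⟨?_, by simp [h1, h2]⟩)
    rw [List.mem_map]
    rintro ⟨⟨a, b⟩, hab, he⟩
    rcases Sym2.eq_iff.mp he with ⟨rfl, rfl⟩ | ⟨rfl, rfl⟩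
    · exact h1 hab
    · exact h2 hab

lemma walkFlow_anti [DecidableEq V] {u v : V} (p : G.Walk u v) (x y : V) :
    walkFlow p x y = - walkFlow p y x := by
  unfold walkFlow; ring

lemma walkFlow_not_adj [DecidableEq V] {u v : V} (p : G.Walk u v) (hp : p.IsPath) {x y : V}
    (h : ¬ G.Adj x y) : walkFlow p x y = 0 := by
  rcases walkFlow_cases p hp x y with ⟨⟨d, -, rfl, rfl⟩, -⟩ | ⟨⟨d, -, rfl, rfl⟩, -⟩ | ⟨-, h0⟩
  · exact absurd d.adj h
  · exact absurd d.adj.symm h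
  · exact h0

/-- Pushing one unit along an `s`-`t` path of residual edges gives a flow. -/
lemma IsFlow.augment [Fintype V] [DecidableEq V] {f : V → V → ℤ} (hf : IsFlow G s t f)
    {p : G.Walk s t} (hp : p.IsPath) (hr : ∀ d ∈ p.darts, f d.fst d.snd < 1) :
    IsFlow G s t fun x y => f x y + walkFlow p x y where
  anti x y := by rw [hf.anti, walkFlow_anti]; ring
  le_one x y := by
    have h := hf.le_one x y
    rcases walkFlow_cases p hp x y with ⟨⟨d, hd, rfl, rfl⟩, h1⟩ | ⟨-, h1⟩ | ⟨-, h1⟩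
    · have := hr d hd; omega
    · omega
    · omega
  adj x y h := by rw [hf.adj x y h, walkFlow_not_adj p hp h, add_zero]
  cons x h1 h2 := by rw [sum_add_distrib, hf.cons x h1 h2, sum_walkFlow]; simp [h1, h2]

/-- Removing an `s`-`t` path of edges carrying one unit gives a flow. -/
lemma IsFlow.remove [Fintype V] [DecidableEq V] {f : V → V → ℤ} (hf : IsFlow G s t f)
    {p : G.Walk s t} (hp : p.IsPath) (hr : ∀ d ∈ p.darts, f d.fst d.snd = 1) :
    IsFlow G s t fun x y => f x y - walkFlow p x y where
  anti x y := by rw [hf.anti, walkFlow_anti]; ring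
  le_one x y := by
    have h := hf.le_one x y
    rcases walkFlow_cases p hp x y with ⟨-, h1⟩ | ⟨⟨d, hd, rfl, rfl⟩, h1⟩ | ⟨-, h1⟩
    · omega
    · have := hr d hd
      have := hf.anti d.fst d.snd
      omega
    · omega
  adj x y h := by rw [hf.adj x y h, walkFlow_not_adj p hp h, sub_zero]
  cons x h1 h2 := by rw [sum_sub_distrib, hf.cons x h1 h2, sum_walkFlow]; simp [h1, h2]

/-- Flow decomposition: a flow of value `k` yields `k` edge-disjoint paths along its support. -/
lemma IsFlow.exists_paths [Fintype V] (hst : s ≠ t) (k : ℕ) : ∀ {f : V → V → ℤ}, IsFlow G s t f →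
    ∑ y, f s y = k → ∃ π : Fin k → G.Walk s t, (∀ i, (π i).IsPath) ∧
      (∀ i j, i ≠ j → List.Disjoint (π i).edges (π j).edges) ∧
      ∀ i, ∀ d ∈ (π i).darts, f d.fst d.snd = 1 := by
  classical
  induction k with
  | zero => exact fun _ _ => ⟨fun i => i.elim0, fun i => i.elim0, fun i => i.elim0, fun i => i.elim0⟩
  | succ k ih =>
    intro f hf hk
    rcases exists_path_or_cut (G := G) (fun x y => f x y = 1)
      (fun x y h => by by_contra hn; rw [hf.adj x y hn] at h; omega) s t with
      ⟨p, hp, hpf⟩ | ⟨S, hs, ht, hS⟩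
    · have hval : ∑ y, (f s y - walkFlow p s y) = k := by
        rw [sum_sub_distrib, hk, sum_walkFlow]; simp [hst]
      obtain ⟨π, h1, h2, h3⟩ := ih (hf.remove hp hpf) hval
      -- An edge used by `p` carries nothing in the remaining flow.
      have hused : ∀ i, ∀ d ∈ (π i).darts, s(d.fst, d.snd) ∉ p.edges ∧ f d.fst d.snd = 1 := by
        intro i d hd
        have h := h3 i d hd
        have hle := hf.le_one d.fst d.snd
        rcases walkFlow_cases p hp d.fst d.snd with ⟨-, e⟩ | ⟨⟨d', hd', e1, e2⟩, e⟩ | ⟨e', e⟩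
        · omega
        · have h5 := hpf d' hd'
          rw [e1, e2] at h5
          have := hf.anti d.fst d.snd
          omega
        · exact ⟨e', by omega⟩
      have hdis : ∀ i, List.Disjoint p.edges (π i).edges := by
        intro i e he he'
        rw [SimpleGraph.Walk.edges, List.mem_map] at he'
        obtain ⟨d, hd, rfl⟩ := he'
        exact (hused i d hd).1 he
      refine ⟨Fin.cons p π, ?_, ?_, ?_⟩
      · exact Fin.cases hp h1
      · intro i j
        refine Fin.cases ?_ (fun i => ?_) i <;> refine Fin.cases ?_ (fun j => ?_) j
        · exact fun h => absurd rfl h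
        · exact fun _ => hdis j
        · exact fun _ => (hdis i).symm
        · exact fun h => h2 i j fun e => h (congrArg _ e)
      · exact Fin.cases hpf fun i d hd => (hused i d hd).2
    · exfalso
      have h := hf.sum_cut hs ht
      have : ∑ x ∈ S, ∑ y ∈ Sᶜ, f x y ≤ 0 := by
        refine sum_nonpos fun x hx => sum_nonpos fun y hy => ?_
        have := hf.le_one x y
        have := hS x hx y (mem_compl.mp hy)
        omega
      push_cast at hk
      omega

/-- Max-flow min-cut: some flow saturates a cut. -/
lemma exists_flow_cut [Fintype V] [DecidableEq V] [DecidableRel G.Adj] (hst : s ≠ t) :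
    ∃ (k : ℕ) (f : V → V → ℤ) (S : Finset V), IsFlow G s t f ∧ ∑ y, f s y = k ∧ s ∈ S ∧ t ∉ S ∧
      ((S ×ˢ Sᶜ).filter fun q => G.Adj q.1 q.2).card = k := by
  let A : Set ℕ := {k | ∃ f : V → V → ℤ, IsFlow G s t f ∧ ∑ y, f s y = k}
  have hne : A.Nonempty := ⟨0, fun _ _ => 0, ⟨by simp, by simp, by simp, by simp⟩, by simp⟩
  have hbd : BddAbove A := by
    refine ⟨Fintype.card V, ?_⟩
    rintro k ⟨f, hf, hk⟩
    have : ∑ y, f s y ≤ ∑ _y : V, (1 : ℤ) := sum_le_sum fun y _ => hf.le_one s y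
    simp at this
    omega
  obtain ⟨f, hf, hk⟩ := Nat.sSup_mem hne hbd
  rcases exists_path_or_cut (G := G) (fun x y => G.Adj x y ∧ f x y < 1)
    (fun x y h => h.1) s t with ⟨p, hp, hpf⟩ | ⟨S, hs, ht, hS⟩
  · exfalso
    have : sSup A + 1 ∈ A := by
      refine ⟨_, hf.augment hp fun d hd => (hpf d hd).2, ?_⟩
      rw [sum_add_distrib, hk, sum_walkFlow]; simp [hst]
    have := le_csSup hbd this
    omega
  · refine ⟨sSup A, f, S, hf, hk, hs, ht, ?_⟩
    have h := hf.sum_cut hs ht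
    have h' : ∑ x ∈ S, ∑ y ∈ Sᶜ, f x y = ∑ x ∈ S, ∑ y ∈ Sᶜ, if G.Adj x y then 1 else 0 := by
      refine sum_congr rfl fun x hx => sum_congr rfl fun y hy => ?_
      have h1 := hS x hx y (mem_compl.mp hy)
      have h2 := hf.le_one x y
      split_ifs with ha
      · have : ¬ f x y < 1 := fun hlt => h1 ⟨ha, hlt⟩
        omega
      · exact hf.adj x y ha
    rw [h', hk, ← sum_product', sum_boole] at h
    exact_mod_cast h

end Flow

/-! ### Edge-disjoint paths and cuts -/

lemma bddAbove_paths {V : Type*} [Fintype V] (G : SimpleGraph V) {s t : V} (hst : s ≠ t) :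
    BddAbove {k | ∃ π : Fin k → G.Walk s t, (∀ i, (π i).IsPath) ∧
      ∀ i j, i ≠ j → List.Disjoint (π i).edges (π j).edges} := by
  classical
  refine ⟨Fintype.card (Sym2 V), ?_⟩
  rintro k ⟨π, -, hd⟩
  have hex : ∀ i, ∃ e, e ∈ (π i).edges := fun i => by
    refine List.exists_mem_of_ne_nil _ fun h => ?_
    exact hst (SimpleGraph.Walk.eq_of_length_eq_zero (p := π i)
      (by rw [← SimpleGraph.Walk.length_edges, h]; rfl))
  choose e he using hex
  have hinj : Function.Injective e := fun i j hij => by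
    by_contra hne
    exact hd i j hne (he i) (hij ▸ he j)
  simpa using Fintype.card_le_of_injective e hinj

/-- The hard half of Menger's theorem for edges: some cut has at most `maxflow G s t` edges. -/
lemma exists_cut {V : Type*} [Fintype V] [DecidableEq V] (G : SimpleGraph V) [DecidableRel G.Adj]
    {s t : V} (hst : s ≠ t) : ∃ S : Finset V, s ∈ S ∧ t ∉ S ∧
      ((S ×ˢ Sᶜ).filter fun q => G.Adj q.1 q.2).card ≤ maxflow G s t := by
  obtain ⟨k, f, S, hf, hk, hs, ht, hS⟩ := exists_flow_cut (G := G) hst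
  refine ⟨S, hs, ht, hS.trans_le ?_⟩
  obtain ⟨π, h1, h2, -⟩ := hf.exists_paths hst k hk
  exact le_csSup (bddAbove_paths G hst) ⟨π, h1, h2⟩

lemma hamiltonian_cut_le {V : Type*} [Fintype V] [DecidableEq V] (G : SimpleGraph V)
    [DecidableRel G.Adj] {n : ℕ} (γ : Equiv.Perm (Fin n)) (hγ : cycleCount γ = 1) (S : Finset V) :
    hamiltonian G (fun x => if x ∈ S then 1 else γ)
      ≤ (n - 1) * ((S ×ˢ Sᶜ).filter fun q => G.Adj q.1 q.2).card := by
  set C := ((S ×ˢ Sᶜ).filter fun q => G.Adj q.1 q.2).image fun q => s(q.1, q.2) with hC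
  have h0 : ∀ σ : Equiv.Perm (Fin n), cayleyDist σ σ = 0 := fun σ => by
    simp [cayleyDist, cayleyLength, cycleCount]
  have h1 : cayleyDist 1 γ = n - 1 := by simp [cayleyDist, cayleyLength, hγ]
  have hterm : ∀ e ∈ G.edgeFinset, edgeTerm (fun x => if x ∈ S then 1 else γ) e
      ≤ if e ∈ C then n - 1 else 0 := by
    intro e
    induction e using Sym2.ind with
    | _ x y =>
      intro he
      have hadj : G.Adj x y := by simpa using he
      have hxy : x ∈ S → y ∉ S → s(x, y) ∈ C := fun hx hy =>
        mem_image.mpr ⟨(x, y), by simp [hx, hy, hadj], rfl⟩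
      have hyx : x ∉ S → y ∈ S → s(x, y) ∈ C := fun hx hy =>
        mem_image.mpr ⟨(y, x), by simp [hx, hy, hadj.symm], Sym2.eq_swap⟩
      rw [edgeTerm, Sym2.lift_mk]
      by_cases hx : x ∈ S <;> by_cases hy : y ∈ S
      · simp [hx, hy, h0]
      · simp [hx, hy, h1, hxy hx hy]
      · simp [hx, hy, cayleyDist_comm γ, h1, hyx hx hy]
      · simp [hx, hy, h0]
  rw [hamiltonian_eq_sum]
  calc _ ≤ ∑ e ∈ G.edgeFinset, if e ∈ C then n - 1 else 0 := sum_le_sum hterm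
    _ ≤ ∑ e, if e ∈ C then n - 1 else 0 := sum_le_sum_of_subset (subset_univ _)
    _ = (n - 1) * C.card := by rw [sum_ite_mem, univ_inter, sum_const, smul_eq_mul, mul_comm]
    _ ≤ _ := Nat.mul_le_mul_left _ card_image_le

/-- The minimum of the Hamiltonian `H_G^{(n)}` over all labelings of a network equals
`(n-1) · maxflow(G)`. -/
theorem min_hamiltonian_eq_maxflow {V : Type*} [Fintype V] (G : SimpleGraph V)
    (s t : V) (hst : s ≠ t) (n : ℕ) (hn : 1 ≤ n)
    (γ : Equiv.Perm (Fin n)) (hγ : cycleCount γ = 1) :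
    sInf {H : ℕ | ∃ α : V → Equiv.Perm (Fin n),
        α s = 1 ∧ α t = γ ∧ hamiltonian G α = H}
      = (n - 1) * maxflow G s t := by
  classical
  obtain ⟨S, hs, ht, hS⟩ := exists_cut G hst
  refine le_antisymm ?_ ?_
  · refine le_trans (Nat.sInf_le
      ⟨fun x => if x ∈ S then 1 else γ, by simp [hs], by simp [ht], rfl⟩) ?_
    exact (hamiltonian_cut_le G γ hγ S).trans (Nat.mul_le_mul_left _ hS)
  · refine le_csInf ⟨_, fun x => if x ∈ S then 1 else γ, by simp [hs], by simp [ht], rfl⟩ ?_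
    rintro H ⟨α, hα, hα', rfl⟩
    obtain ⟨π, h1, h2⟩ := Nat.sSup_mem (s := {k | ∃ π : Fin k → G.Walk s t, (∀ i, (π i).IsPath) ∧
      ∀ i j, i ≠ j → List.Disjoint (π i).edges (π j).edges})
      ⟨0, fun i => i.elim0, fun i => i.elim0, fun i => i.elim0⟩ (bddAbove_paths G hst)
    exact mul_le_hamiltonian G hn α hα (hα' ▸ hγ) π h1 h2
end

section
/- Let G = (V,E) be a network with source s and sink t, let n ≥ 1, let α be a labeling of G, and let π₁, …, π_k be pairwise edge-disjoint paths from s to t in G. Then H_G^{(n)}(α) ≥ k(n−1) + Σ_{e = {x,y} ∈ E, e not an edge of any π_i} d(α(x), α(y)); in particular H_G^{(n)}(α) ≥ k(n−1). -/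
/-- The functions `Fin n → ℚ` invariant under the permutation `σ`. -/
def fixedSpace {n : ℕ} (σ : Equiv.Perm (Fin n)) : Submodule ℚ (Fin n → ℚ) where
  carrier := {f | ∀ x, f (σ x) = f x}
  add_mem' := by
    intro f g hf hg x
    simp [hf x, hg x]
  zero_mem' := by
    intro x
    rfl
  smul_mem' := by
    intro c f hf x
    simp [hf x]

/-- A name for the cycle of `σ` through `x`: the cycle itself as a permutation if it is
nontrivial, and the point `x` if `x` is fixed. -/
def cycleLabel {n : ℕ} (σ : Equiv.Perm (Fin n)) (x : Fin n) : Equiv.Perm (Fin n) ⊕ Fin n :=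
  if σ x = x then Sum.inr x else Sum.inl (σ.cycleOf x)

lemma cycleLabel_eq_iff {n : ℕ} (σ : Equiv.Perm (Fin n)) (x y : Fin n) :
    cycleLabel σ x = cycleLabel σ y ↔ σ.SameCycle x y := by
  unfold cycleLabel
  by_cases hx : σ x = x
  · have key : σ.SameCycle x y ↔ x = y := by
      refine ⟨fun h => h.eq_of_left hx, ?_⟩
      rintro rfl
      exact Equiv.Perm.SameCycle.refl _ _
    by_cases hy : σ y = y
    · simp [hx, hy, key]
    · have hne : x ≠ y := by
        rintro rfl
        exact hy hx
      simp [hx, hy, key, hne]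
  · by_cases hy : σ y = y
    · have hne : ¬ σ.SameCycle x y := by
        intro h
        have := h.eq_of_right hy
        subst this
        exact hx hy
      simp [hx, hy, hne]
    · simp only [hx, hy, if_false, Sum.inl.injEq]
      rw [Equiv.Perm.sameCycle_iff_cycleOf_eq_of_mem_support
        (Equiv.Perm.mem_support.2 hx) (Equiv.Perm.mem_support.2 hy)]

lemma image_cycleLabel {n : ℕ} (σ : Equiv.Perm (Fin n)) :
    Finset.univ.image (cycleLabel σ) = σ.cycleFactorsFinset.disjSum σ.supportᶜ := by
  ext c
  simp only [Finset.mem_image, Finset.mem_univ, true_and]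
  constructor
  · rintro ⟨x, rfl⟩
    unfold cycleLabel
    split_ifs with hx
    · simpa using hx
    · simpa [Equiv.Perm.cycleOf_mem_cycleFactorsFinset_iff] using hx
  · rcases c with c | x
    · intro hc
      have hc : c ∈ σ.cycleFactorsFinset := by simpa using hc
      obtain ⟨a, ha⟩ := (Equiv.Perm.mem_cycleFactorsFinset_iff.1 hc).1.nonempty_support
      have hσ := Equiv.Perm.mem_support.1 (Equiv.Perm.mem_cycleFactorsFinset_support_le hc ha)
      refine ⟨a, ?_⟩
      simp [cycleLabel, hσ, ← Equiv.Perm.cycle_is_cycleOf ha hc]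
    · intro hx
      have hx : σ x = x := by simpa using hx
      exact ⟨x, by simp [cycleLabel, hx]⟩

lemma card_image_cycleLabel {n : ℕ} (σ : Equiv.Perm (Fin n)) :
    (Finset.univ.image (cycleLabel σ)).card = cycleCount σ := by
  rw [image_cycleLabel, Finset.card_disjSum, Finset.card_compl, Fintype.card_fin,
    cycleCount, Equiv.Perm.cycleType_def, Multiset.card_map]
  rfl

/-- Invariant functions are exactly those factoring through the set of cycles. -/
lemma finrank_fixedSpace {n : ℕ} (σ : Equiv.Perm (Fin n)) :
    Module.finrank ℚ (fixedSpace σ) = cycleCount σ := by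
  let T := Finset.univ.image (cycleLabel σ)
  let q : Fin n → T := fun x => ⟨cycleLabel σ x, Finset.mem_image_of_mem _ (Finset.mem_univ x)⟩
  have hq : Function.Surjective q := by
    rintro ⟨c, hc⟩
    obtain ⟨x, -, rfl⟩ := Finset.mem_image.1 hc
    exact ⟨x, rfl⟩
  have hqe (x y : Fin n) : q x = q y ↔ σ.SameCycle x y := by
    rw [← cycleLabel_eq_iff]
    exact Subtype.ext_iff
  have hrange : fixedSpace σ = LinearMap.range (LinearMap.funLeft ℚ ℚ q) := by
    ext f
    constructor
    · intro hf
      have hpow (i : ℕ) (x : Fin n) : f ((σ ^ i) x) = f x := by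
        induction i with
        | zero => simp
        | succ i ih => rw [pow_succ', Equiv.Perm.mul_apply, hf, ih]
      refine ⟨fun c => f (Function.surjInv hq c), ?_⟩
      ext x
      obtain ⟨i, hi⟩ :=
        ((hqe _ _).1 (Function.surjInv_eq hq (q x))).exists_nat_pow_eq
      change f (Function.surjInv hq (q x)) = f x
      exact (hpow i _).symm.trans (congrArg f hi)
    · rintro ⟨g, rfl⟩ x
      have h : q (σ x) = q x := (hqe _ _).2 (Equiv.Perm.sameCycle_apply_left.2 (.refl _ _))
      simp [LinearMap.funLeft_apply, h]
  rw [hrange, LinearMap.finrank_range_of_inj (LinearMap.funLeft_injective_of_surjective _ _ _ hq),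
    Module.finrank_fintype_fun_eq_card, Fintype.card_coe, card_image_cycleLabel]

lemma cayleyLength_mul_le {n : ℕ} (σ τ : Equiv.Perm (Fin n)) :
    cayleyLength (σ * τ) ≤ cayleyLength σ + cayleyLength τ := by
  have h1 := Submodule.finrank_sup_add_finrank_inf_eq (fixedSpace σ) (fixedSpace τ)
  have h2 : Module.finrank ℚ ↥(fixedSpace σ ⊓ fixedSpace τ) ≤
      Module.finrank ℚ (fixedSpace (σ * τ)) := by
    apply Submodule.finrank_mono
    rintro f ⟨hσ, hτ⟩ x
    rw [Equiv.Perm.mul_apply, hσ, hτ]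
  have h3 := Submodule.finrank_le (fixedSpace σ ⊔ fixedSpace τ)
  have h4 := Submodule.finrank_le (fixedSpace σ)
  have h5 := Submodule.finrank_le (fixedSpace τ)
  simp only [finrank_fixedSpace, Module.finrank_fintype_fun_eq_card, Fintype.card_fin] at *
  unfold cayleyLength
  omega

lemma cayleyDist_triangle {n : ℕ} (ρ σ τ : Equiv.Perm (Fin n)) :
    cayleyDist ρ τ ≤ cayleyDist ρ σ + cayleyDist σ τ := by
  have h := cayleyLength_mul_le (ρ⁻¹ * σ) (σ⁻¹ * τ)
  rwa [show ρ⁻¹ * σ * (σ⁻¹ * τ) = ρ⁻¹ * τ by group] at h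

lemma cayleyDist_le_walk_sum {V : Type*} {G : SimpleGraph V} {n : ℕ}
    (α : V → Equiv.Perm (Fin n)) {u v : V} (p : G.Walk u v) :
    cayleyDist (α u) (α v) ≤ (p.edges.map (edgeTerm α)).sum := by
  induction p with
  | nil => simp [cayleyDist, cayleyLength, cycleCount]
  | @cons u v w h p ih =>
    rw [SimpleGraph.Walk.edges_cons, List.map_cons, List.sum_cons]
    exact (cayleyDist_triangle _ (α v) _).trans (Nat.add_le_add_left ih _)

/-- Given a labeling `α` and pairwise edge-disjoint paths `π 0, …, π (k-1)` from the source
to the sink, the Hamiltonian is at least `k(n-1)` plus the sum of the edge contributions over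
the edges not used by any of the paths; in particular it is at least `k(n-1)`. -/
theorem hamiltonian_ge_of_edge_disjoint_paths {V : Type*} [Fintype V] (G : SimpleGraph V)
    (s t : V) (hst : s ≠ t) (n : ℕ) (hn : 1 ≤ n)
    (γ : Equiv.Perm (Fin n)) (hγ : cycleCount γ = 1)
    (α : V → Equiv.Perm (Fin n)) (hαs : α s = 1) (hαt : α t = γ)
    (k : ℕ) (π : Fin k → G.Walk s t) (hpath : ∀ i, (π i).IsPath)
    (hdisj : ∀ i j, i ≠ j → List.Disjoint (π i).edges (π j).edges) :
    k * (n - 1) + ∑ᶠ e ∈ {e ∈ G.edgeSet | ∀ i, e ∉ (π i).edges}, edgeTerm α e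
        ≤ hamiltonian G α ∧
    k * (n - 1) ≤ hamiltonian G α := by
  classical
  have hk : k * (n - 1) + ∑ᶠ e ∈ {e ∈ G.edgeSet | ∀ i, e ∉ (π i).edges}, edgeTerm α e
      ≤ hamiltonian G α := by
    have hpi (i : Fin k) : n - 1 ≤ ∑ e ∈ (π i).edges.toFinset, edgeTerm α e := by
      rw [List.sum_toFinset _ (hpath i).isTrail.edges_nodup]
      refine le_trans (le_of_eq ?_) (cayleyDist_le_walk_sum α (π i))
      simp [hαs, hαt, cayleyDist, cayleyLength, hγ]
    let used : Finset (Sym2 V) := Finset.univ.biUnion fun i => (π i).edges.toFinset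
    have hused : k * (n - 1) ≤ ∑ e ∈ used, edgeTerm α e := by
      rw [Finset.sum_biUnion]
      · simpa using Finset.card_nsmul_le_sum Finset.univ _ (n - 1) fun i _ => hpi i
      · intro i _ j _ hij
        exact List.disjoint_toFinset_iff_disjoint.2 (hdisj i j hij)
    have hunused : ∑ᶠ e ∈ {e ∈ G.edgeSet | ∀ i, e ∉ (π i).edges}, edgeTerm α e
        = ∑ e ∈ G.edgeFinset \ used, edgeTerm α e := by
      rw [← finsum_mem_coe_finset]
      congr! 3 with e
      simp [used]
    have hsub : used ⊆ G.edgeFinset := by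
      intro e he
      obtain ⟨i, -, hi⟩ := Finset.mem_biUnion.1 he
      exact SimpleGraph.mem_edgeFinset.2
        ((π i).edges_subset_edgeSet (List.mem_toFinset.1 hi))
    have hH : hamiltonian G α = ∑ e ∈ G.edgeFinset, edgeTerm α e := by
      rw [hamiltonian, ← finsum_mem_coe_finset, SimpleGraph.coe_edgeFinset]
    rw [hH, hunused, ← Finset.sum_sdiff hsub, add_comm]
    exact Nat.add_le_add_left hused _
  exact ⟨hk, (Nat.le_add_right _ _).trans hk⟩
end

section
/- Let G = (V,E) be a network with source s and sink t, and let n ≥ 1. Then there exists a labeling α of G such that H_G^{(n)}(α) = (n−1)·maxflow(G). -/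
open Finset

/-! ### Unit flows -/

/-- A unit-capacity integral `s`-`t` flow on `G`; `f u v` is the net flow from `u` to `v`. -/
structure IsUnitFlow {V : Type*} [Fintype V] (G : SimpleGraph V) (s t : V)
    (f : V → V → ℤ) : Prop where
  antisymm : ∀ u v, f u v = - f v u
  le_one : ∀ u v, f u v ≤ 1
  adj : ∀ u v, f u v ≠ 0 → G.Adj u v
  conserve : ∀ u, u ≠ s → u ≠ t → ∑ v, f u v = 0

open Classical in
/-- The ordered pairs `(u, v)` joined by an edge with `u ∈ S` and `v ∉ S`; each edge of the cut
determined by `S` occurs exactly once. -/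
noncomputable def cutPairs {V : Type*} [Fintype V] (G : SimpleGraph V) (S : Set V) :
    Finset (V × V) :=
  Finset.univ.filter fun p => p.1 ∈ S ∧ p.2 ∉ S ∧ G.Adj p.1 p.2

lemma mem_cutPairs {V : Type*} [Fintype V] {G : SimpleGraph V} {S : Set V} {p : V × V} :
    p ∈ cutPairs G S ↔ p.1 ∈ S ∧ p.2 ∉ S ∧ G.Adj p.1 p.2 := by
  classical
  simp [cutPairs]

/-- The value of a flow is its net flow across any cut, since the flow inside `S` cancels by
antisymmetry. -/
lemma IsUnitFlow.value_eq_cut {V : Type*} [Fintype V] {G : SimpleGraph V} {s t : V}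
    {f : V → V → ℤ} (hf : IsUnitFlow G s t f) {S : Set V} (hs : s ∈ S) (ht : t ∉ S) :
    ∑ v, f s v = ∑ p ∈ cutPairs G S, f p.1 p.2 := by
  classical
  have h1 : ∑ u ∈ univ.filter (· ∈ S), ∑ v, f u v = ∑ v, f s v := by
    apply Finset.sum_eq_single_of_mem s (by simpa using hs)
    intro u hu hus
    refine hf.conserve u hus ?_
    rintro rfl
    exact ht (by simpa using hu)
  have h2 : ∑ u ∈ univ.filter (· ∈ S), ∑ v ∈ univ.filter (· ∈ S), f u v = 0 := by
    have h := Finset.sum_comm (s := univ.filter (· ∈ S)) (t := univ.filter (· ∈ S)) (f := f)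
    have h' : ∑ u ∈ univ.filter (· ∈ S), ∑ v ∈ univ.filter (· ∈ S), f u v
        = - ∑ u ∈ univ.filter (· ∈ S), ∑ v ∈ univ.filter (· ∈ S), f v u := by
      simp only [← Finset.sum_neg_distrib]
      exact Finset.sum_congr rfl fun u _ => Finset.sum_congr rfl fun v _ => hf.antisymm u v
    lia
  have h3 : ∑ u ∈ univ.filter (· ∈ S), ∑ v ∈ univ.filter (· ∉ S), f u v
      = ∑ p ∈ cutPairs G S, f p.1 p.2 := by
    rw [← Finset.sum_product']
    symm
    apply Finset.sum_subset
    · intro p hp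
      rw [mem_cutPairs] at hp
      simp [hp.1, hp.2.1]
    · intro p hp hp'
      rw [mem_cutPairs] at hp'
      by_contra hne
      simp only [mem_product, mem_filter, mem_univ, true_and] at hp
      exact hp' ⟨hp.1, hp.2, hf.adj _ _ hne⟩
  rw [← h1, ← h3]
  simp_rw [← Finset.sum_filter_add_sum_filter_not univ (· ∈ S)]
  rw [Finset.sum_add_distrib, h2, zero_add]

open Classical in
/-- The net number of times a walk traverses the edge `{u, v}` from `u` to `v`. -/
noncomputable def pathFlow {V : Type*} {G : SimpleGraph V} {a b : V} (p : G.Walk a b)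
    (u v : V) : ℤ :=
  ((p.darts.map fun d => (d.fst, d.snd)).count (u, v) : ℤ)
    - (p.darts.map fun d => (d.fst, d.snd)).count (v, u)

lemma mem_map_darts_iff {V : Type*} {G : SimpleGraph V} {a b : V} (p : G.Walk a b) (u v : V) :
    (u, v) ∈ p.darts.map (fun d => (d.fst, d.snd)) ↔ ∃ h : G.Adj u v, ⟨(u, v), h⟩ ∈ p.darts := by
  constructor
  · intro h
    obtain ⟨⟨⟨x, y⟩, hxy⟩, hd, he⟩ := List.mem_map.1 h
    obtain ⟨rfl, rfl⟩ := Prod.mk.inj he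
    exact ⟨hxy, hd⟩
  · rintro ⟨h, hd⟩
    exact List.mem_map.2 ⟨_, hd, rfl⟩

open Classical in
lemma sum_pathFlow {V : Type*} [Fintype V] {G : SimpleGraph V} {a b : V} (p : G.Walk a b)
    (u : V) : ∑ v, pathFlow p u v = (if u = a then 1 else 0) - (if u = b then 1 else 0) := by
  induction p with
  | nil => simp [pathFlow]
  | @cons a c b h p ih =>
    have key : ∀ v, pathFlow (SimpleGraph.Walk.cons h p) u v
        = pathFlow p u v + ((if u = a then (if v = c then 1 else 0) else 0)
          - (if u = c then (if v = a then 1 else 0) else 0)) := by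
      intro v
      simp only [pathFlow, SimpleGraph.Walk.darts_cons, List.map_cons, List.count_cons,
        beq_iff_eq, Prod.mk.injEq]
      push_cast
      split_ifs <;> grind
    simp_rw [key]
    rw [Finset.sum_add_distrib, ih, Finset.sum_sub_distrib]
    by_cases h1 : u = a <;> by_cases h2 : u = c <;> simp [h1, h2]

lemma pathFlow_antisymm {V : Type*} {G : SimpleGraph V} {a b : V} (p : G.Walk a b) (u v : V) :
    pathFlow p u v = - pathFlow p v u := by
  simp [pathFlow]

/-- A path uses every edge at most once, in one direction. -/
lemma pathFlow_cases {V : Type*} {G : SimpleGraph V} {a b : V} {p : G.Walk a b} (hp : p.IsPath)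
    (u v : V) :
    (pathFlow p u v = 1 ∧ ∃ h : G.Adj u v, ⟨(u, v), h⟩ ∈ p.darts) ∨
    (pathFlow p u v = -1 ∧ ∃ h : G.Adj v u, ⟨(v, u), h⟩ ∈ p.darts) ∨
    (pathFlow p u v = 0 ∧ s(u, v) ∉ p.edges) := by
  classical
  have hmap : (p.darts.map fun d => (d.fst, d.snd)).map (fun x => s(x.1, x.2)) = p.edges := by
    rw [List.map_map]; rfl
  have hnd : ((p.darts.map fun d => (d.fst, d.snd)).map (fun x => s(x.1, x.2))).Nodup := by
    rw [hmap]; exact hp.isTrail.edges_nodup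
  have hnd' := hnd.of_map
  have hinj := List.inj_on_of_nodup_map hnd
  rw [← mem_map_darts_iff, ← mem_map_darts_iff, ← hmap]
  have hmem : s(u, v) ∈ (p.darts.map fun d => (d.fst, d.snd)).map (fun x => s(x.1, x.2)) ↔
      (u, v) ∈ p.darts.map (fun d => (d.fst, d.snd)) ∨
      (v, u) ∈ p.darts.map (fun d => (d.fst, d.snd)) := by
    generalize p.darts.map (fun d => (d.fst, d.snd)) = l
    rw [List.mem_map]
    constructor
    · rintro ⟨⟨x, y⟩, hx, he⟩
      rcases Sym2.eq_iff.1 he with ⟨h1, h2⟩ | ⟨h1, h2⟩ <;> grind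
    · rintro (h | h)
      · exact ⟨_, h, rfl⟩
      · exact ⟨_, h, Sym2.eq_swap⟩
  have hadj : (u, v) ∈ p.darts.map (fun d => (d.fst, d.snd)) → u ≠ v := fun h =>
    ((mem_map_darts_iff p u v).1 h).1.ne
  rw [hmem]
  unfold pathFlow
  revert hnd' hinj hadj
  generalize p.darts.map (fun d => (d.fst, d.snd)) = l
  intro hnd' hinj hadj
  rw [List.Nodup.count hnd', List.Nodup.count hnd']
  by_cases h1 : (u, v) ∈ l
  · have h2 : (v, u) ∉ l := by
      intro h2
      have := hinj h1 h2 Sym2.eq_swap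
      exact hadj h1 (Prod.mk.inj this).1
    simp [h1, h2]
  · by_cases h2 : (v, u) ∈ l <;> simp [h1, h2]

/-- If no `s`-`t` path consists of darts satisfying `P` only, then the set of vertices reachable
from `s` through such darts is a cut with no outgoing dart satisfying `P`. -/
lemma exists_cut_of_no_path {V : Type*} {G : SimpleGraph V} {s t : V} (P : V → V → Prop)
    (h : ∀ p : G.Walk s t, p.IsPath → ∃ d ∈ p.darts, ¬ P d.fst d.snd) :
    ∃ S : Set V, s ∈ S ∧ t ∉ S ∧ ∀ u v, u ∈ S → v ∉ S → G.Adj u v → ¬ P u v := by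
  classical
  refine ⟨{v | ∃ p : G.Walk s v, ∀ d ∈ p.darts, P d.fst d.snd}, ⟨.nil, by simp⟩, ?_, ?_⟩
  · rintro ⟨p, hp⟩
    obtain ⟨d, hd, hd'⟩ := h p.bypass p.bypass_isPath
    exact hd' (hp d (p.darts_bypass_subset_darts hd))
  · rintro u v ⟨p, hp⟩ hv hadj hP
    refine hv ⟨p.concat hadj, ?_⟩
    intro d hd
    rw [SimpleGraph.Walk.darts_concat, List.concat_eq_append, List.mem_append] at hd
    rcases hd with hd | hd
    · exact hp d hd
    · rw [List.mem_singleton] at hd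
      subst hd
      exact hP

/-! ### Max-flow min-cut -/

/-- A flow of maximum value saturates some cut: otherwise it could be augmented along a residual
path. -/
lemma exists_cut_of_maximal {V : Type*} [Fintype V] {G : SimpleGraph V} {s t : V} (hst : s ≠ t)
    {f : V → V → ℤ} (hf : IsUnitFlow G s t f)
    (hmax : ∀ g, IsUnitFlow G s t g → ∑ v, g s v ≤ ∑ v, f s v) :
    ∃ S : Set V, s ∈ S ∧ t ∉ S ∧ ∑ v, f s v = #(cutPairs G S) := by
  obtain ⟨S, hs, ht, hS⟩ := exists_cut_of_no_path (G := G) (s := s) (t := t) (fun u v => f u v ≤ 0) (by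
    by_contra! hcon
    obtain ⟨p, hp, hres⟩ := hcon
    have hg : IsUnitFlow G s t (fun u v => f u v + pathFlow p u v) := by
      refine ⟨fun u v => ?_, fun u v => ?_, fun u v => ?_, fun u hus hut => ?_⟩
      · rw [hf.antisymm u v, pathFlow_antisymm]; ring
      · rcases pathFlow_cases hp u v with ⟨h, ha, hd⟩ | ⟨h, ha, hd⟩ | ⟨h, -⟩
        · have := hres _ hd
          simp only at this
          lia
        · have := hf.le_one u v
          lia
        · have := hf.le_one u v
          lia
      · intro hne
        rcases pathFlow_cases hp u v with ⟨h, ha, hd⟩ | ⟨h, ha, hd⟩ | ⟨h, -⟩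
        · exact ha
        · exact ha.symm
        · exact hf.adj u v (by lia)
      · simp [Finset.sum_add_distrib, sum_pathFlow, hf.conserve u hus hut, hus, hut]
    have := hmax _ hg
    simp [Finset.sum_add_distrib, sum_pathFlow, hst] at this)
  refine ⟨S, hs, ht, ?_⟩
  rw [hf.value_eq_cut hs ht, Finset.card_eq_sum_ones, Nat.cast_sum]
  refine Finset.sum_congr rfl fun p hp => ?_
  rw [mem_cutPairs] at hp
  have h1 := hS _ _ hp.1 hp.2.1 hp.2.2
  have h2 := hf.le_one p.1 p.2
  push_cast
  lia

/-- Flow decomposition. The saturation of the path darts is the invariant that keeps the path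
removed at each step disjoint from the later ones. -/
lemma exists_paths_of_flow {V : Type*} [Fintype V] {G : SimpleGraph V} {s t : V} (hst : s ≠ t)
    (k : ℕ) : ∀ f : V → V → ℤ, IsUnitFlow G s t f → ∑ v, f s v = k →
    ∃ π : Fin k → G.Walk s t, (∀ i, (π i).IsPath) ∧
      (∀ i j, i ≠ j → List.Disjoint (π i).edges (π j).edges) ∧
      ∀ i, ∀ d ∈ (π i).darts, f d.fst d.snd = 1 := by
  induction k with
  | zero => exact fun f _ _ => ⟨fun i => i.elim0, fun i => i.elim0, fun i => i.elim0,
      fun i => i.elim0⟩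
  | succ k ih =>
    intro f hf hk
    have hex : ∃ p : G.Walk s t, p.IsPath ∧ ∀ d ∈ p.darts, f d.fst d.snd = 1 := by
      by_contra! hcon
      obtain ⟨S, hs, ht, hS⟩ := exists_cut_of_no_path (fun u v => f u v = 1) hcon
      have h := hf.value_eq_cut hs ht
      have h' : ∑ p ∈ cutPairs G S, f p.1 p.2 ≤ 0 := by
        refine Finset.sum_nonpos fun p hp => ?_
        rw [mem_cutPairs] at hp
        have h1 := hS _ _ hp.1 hp.2.1 hp.2.2
        have h2 := hf.le_one p.1 p.2
        lia
      push_cast at hk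
      lia
    obtain ⟨p, hp, hsat⟩ := hex
    have hg : IsUnitFlow G s t (fun u v => f u v - pathFlow p u v) := by
      refine ⟨fun u v => ?_, fun u v => ?_, fun u v => ?_, fun u hus hut => ?_⟩
      · rw [hf.antisymm u v, pathFlow_antisymm]; ring
      · rcases pathFlow_cases hp u v with ⟨h, ha, hd⟩ | ⟨h, ha, hd⟩ | ⟨h, -⟩
        · have := hf.le_one u v
          lia
        · have := hsat _ hd
          have h2 := hf.antisymm u v
          simp only at this
          lia
        · have := hf.le_one u v
          lia
      · intro hne
        rcases pathFlow_cases hp u v with ⟨h, ha, hd⟩ | ⟨h, ha, hd⟩ | ⟨h, -⟩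
        · exact ha
        · exact ha.symm
        · exact hf.adj u v (by lia)
      · simp [Finset.sum_sub_distrib, sum_pathFlow, hf.conserve u hus hut, hus, hut]
    have hgk : ∑ v, (f s v - pathFlow p s v) = k := by
      rw [Finset.sum_sub_distrib, sum_pathFlow, hk]
      simp [hst]
    obtain ⟨π, hπ, hdis, hπsat⟩ := ih _ hg hgk
    -- A dart saturated by the remaining flow is saturated by `f` and its edge avoids `p`.
    have hrest : ∀ u v, f u v - pathFlow p u v = 1 → f u v = 1 ∧ s(u, v) ∉ p.edges := by
      intro u v huv
      rcases pathFlow_cases hp u v with ⟨h, ha, hd⟩ | ⟨h, ha, hd⟩ | ⟨h, hn⟩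
      · have := hf.le_one u v
        lia
      · have := hsat _ hd
        have h2 := hf.antisymm u v
        simp only at this
        lia
      · exact ⟨by lia, hn⟩
    have hpi : ∀ i, List.Disjoint p.edges (π i).edges := by
      intro i e he he'
      obtain ⟨⟨⟨u, v⟩, huv⟩, hd, rfl⟩ := List.mem_map.1 he'
      exact (hrest u v (hπsat i _ hd)).2 he
    refine ⟨Fin.cons p π, ?_, ?_, ?_⟩
    · intro i
      refine Fin.cases ?_ (fun i => ?_) i
      · simpa using hp
      · simpa using hπ i
    · intro i j
      refine Fin.cases ?_ (fun i => ?_) i <;> refine Fin.cases ?_ (fun j => ?_) j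
      · simp
      · intro _; simpa using hpi j
      · intro _; simpa using (hpi i).symm
      · intro hij
        simpa using hdis i j (fun h => hij (by rw [h]))
    · intro i
      refine Fin.cases ?_ (fun i => ?_) i
      · simpa using hsat
      · intro d hd
        rw [Fin.cons_succ] at hd
        exact (hrest _ _ (hπsat i d hd)).1

lemma card_paths_le_cut {V : Type*} [Fintype V] {G : SimpleGraph V} {s t : V} {S : Set V}
    (hs : s ∈ S) (ht : t ∉ S) {k : ℕ} (π : Fin k → G.Walk s t)
    (hdis : ∀ i j, i ≠ j → List.Disjoint (π i).edges (π j).edges) :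
    k ≤ #(cutPairs G S) := by
  choose d hd hd1 hd2 using fun i => (π i).exists_boundary_dart S hs ht
  have hinj : Function.Injective fun i => ((d i).fst, (d i).snd) := by
    intro i j hij
    by_contra hne
    have hij' : d i = d j := SimpleGraph.Dart.ext _ _ hij
    refine hdis i j hne (List.mem_map_of_mem (hd i)) ?_
    rw [hij']
    exact List.mem_map_of_mem (hd j)
  have := Finset.card_le_card_of_injOn (s := (univ : Finset (Fin k))) (t := cutPairs G S) _
    (fun i _ => mem_cutPairs.2 ⟨hd1 i, hd2 i, (d i).adj⟩) hinj.injOn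
  simpa using this

/-- Edge version of Menger's theorem. -/
lemma exists_cut_eq_maxflow {V : Type*} [Fintype V] (G : SimpleGraph V) {s t : V} (hst : s ≠ t) :
    ∃ S : Set V, s ∈ S ∧ t ∉ S ∧ #(cutPairs G S) = maxflow G s t := by
  obtain ⟨m, ⟨f, hf, hfm⟩, hmax⟩ := Int.exists_greatest_of_bdd
    (P := fun z => ∃ f, IsUnitFlow G s t f ∧ ∑ v, f s v = z)
    ⟨Fintype.card V, by
      rintro z ⟨f, hf, rfl⟩
      calc ∑ v, f s v ≤ ∑ _v : V, (1 : ℤ) := Finset.sum_le_sum fun v _ => hf.le_one s v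
        _ = Fintype.card V := by simp⟩
    ⟨0, fun _ _ => 0, ⟨by simp, by simp, by simp, by simp⟩, by simp⟩
  obtain ⟨S, hs, ht, hS⟩ := exists_cut_of_maximal hst hf
    (fun g hg => by rw [hfm]; exact hmax _ ⟨g, hg, rfl⟩)
  obtain ⟨π, hπ, hdis, -⟩ := exists_paths_of_flow hst _ f hf hS
  refine ⟨S, hs, ht, ?_⟩
  have hgr : IsGreatest {k | ∃ π : Fin k → G.Walk s t, (∀ i, (π i).IsPath) ∧
      ∀ i j, i ≠ j → List.Disjoint (π i).edges (π j).edges} #(cutPairs G S) :=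
    ⟨⟨π, hπ, hdis⟩, fun k ⟨π', _, hdis'⟩ => card_paths_le_cut hs ht π' hdis'⟩
  exact hgr.csSup_eq.symm

/-! ### The Hamiltonian of a cut -/

lemma cayleyDist_self {n : ℕ} (σ : Equiv.Perm (Fin n)) : cayleyDist σ σ = 0 := by
  simp [cayleyDist, cayleyLength, cycleCount]

open Classical in
lemma hamiltonian_cut {V : Type*} [Fintype V] (G : SimpleGraph V) (S : Set V) {n : ℕ}
    (γ : Equiv.Perm (Fin n)) :
    hamiltonian G (fun v => if v ∈ S then 1 else γ) = cayleyDist 1 γ * #(cutPairs G S) := by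
  have hinj : Set.InjOn (fun p : V × V => s(p.1, p.2)) (cutPairs G S) := by
    rintro ⟨a, b⟩ h1 ⟨c, d⟩ h2 h
    rw [Finset.mem_coe, mem_cutPairs] at h1 h2
    rcases Sym2.eq_iff.1 h with ⟨h3, h4⟩ | ⟨h3, h4⟩
    · exact Prod.ext h3 h4
    · have h3' : a = d := h3
      exact absurd h1.1 (h3' ▸ h2.2.1)
  have hsub : (cutPairs G S).image (fun p => s(p.1, p.2)) ⊆ G.edgeFinset := by
    intro e he
    obtain ⟨p, hp, rfl⟩ := Finset.mem_image.1 he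
    simpa using (mem_cutPairs.1 hp).2.2
  unfold hamiltonian
  rw [← SimpleGraph.coe_edgeFinset, finsum_mem_coe_finset, ← Finset.sum_subset hsub,
    Finset.sum_image hinj]
  · rw [Finset.sum_congr rfl (g := fun _ => cayleyDist 1 γ)]
    · simp [mul_comm]
    · intro p hp
      rw [mem_cutPairs] at hp
      simp [edgeTerm, hp.1, hp.2.1]
  · intro e
    induction e with
    | h u v =>
      intro he hn
      have hadj : G.Adj u v := by simpa using he
      by_cases hu : u ∈ S <;> by_cases hv : v ∈ S
      · simp [edgeTerm, hu, hv, cayleyDist_self]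
      · exact absurd (Finset.mem_image.2 ⟨(u, v), mem_cutPairs.2 ⟨hu, hv, hadj⟩, rfl⟩) hn
      · refine absurd (Finset.mem_image.2 ?_) hn
        exact ⟨(v, u), mem_cutPairs.2 ⟨hv, hu, hadj.symm⟩, Sym2.eq_swap⟩
      · simp [edgeTerm, hu, hv, cayleyDist_self]

/-- There exists a labeling of the network whose Hamiltonian equals `(n-1) · maxflow(G)`. -/
theorem exists_labeling_hamiltonian_eq_maxflow {V : Type*} [Fintype V] (G : SimpleGraph V)
    (s t : V) (hst : s ≠ t) (n : ℕ) (hn : 1 ≤ n)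
    (γ : Equiv.Perm (Fin n)) (hγ : cycleCount γ = 1) :
    ∃ α : V → Equiv.Perm (Fin n), α s = 1 ∧ α t = γ ∧
      hamiltonian G α = (n - 1) * maxflow G s t := by
  classical
  obtain ⟨S, hs, ht, hS⟩ := exists_cut_eq_maxflow G hst
  refine ⟨fun v => if v ∈ S then 1 else γ, by simp [hs], by simp [ht], ?_⟩
  rw [hamiltonian_cut, hS]
  simp [cayleyDist, cayleyLength, hγ]
end
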